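/- Let A = ⟨Q,Σ⟩ be a PFA with |Q| = n and |Σ| = m, and let ℓ > 0. If the SAT instance (V,C) encoding (A,ℓ) is satisfiable, then A has a carefully synchronizing word of length ℓ; more precisely, if φ is a satisfying assignment and χ : {1,…,ℓ} → {1,…,m} is the map assigning to each t the unique i with φ(x_{i,t}) = 1, then the word w = a_{χ(1)}⋯a_{χ(ℓ)} is carefully synchronizing for A. -/

import Mathlib

open Set

/-- The extension of the transition function of a PFA (with states `Fin n` and letters
`Fin m`) to subsets of states and words: `δ(S,ε) = S`, `δ(S,va) = ⋃_{q ∈ δ(S,v)} δ(q,a)`. -/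
def pfaExt {n m : ℕ} (δ : Fin n → Fin m → Option (Fin n))
    (S : Set (Fin n)) (w : List (Fin m)) : Set (Fin n) :=
  w.foldl (fun T a => {p | ∃ q ∈ T, δ q a = some p}) S

/-- A nonempty word `w = a₁⋯a_ℓ` is carefully synchronizing for the PFA `δ` if (C1) its
first letter is defined at every state, (C2) for `1 < t ≤ ℓ` the letter `a_t` is defined
at every state of `δ(Q, a₁⋯a_{t-1})`, and (C3) `|δ(Q,w)| = 1`. -/
def CarefulSync {n m : ℕ} (δ : Fin n → Fin m → Option (Fin n)) (w : List (Fin m)) : Prop :=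
  w ≠ [] ∧
  (∀ t : Fin w.length, ∀ q ∈ pfaExt δ Set.univ (w.take t.val), (δ q (w.get t)).isSome) ∧
  (pfaExt δ Set.univ w).ncard = 1

/-- Boolean variables of the SAT instance encoding `(A, ℓ)`: letter variables `x i t`
(`1 ≤ i ≤ m`, `1 ≤ t ≤ ℓ`) and state variables `y j t` (`1 ≤ j ≤ n`, `0 ≤ t ≤ ℓ`). -/
inductive SatVar (n m ℓ : ℕ) : Type where
  | x : Fin m → Fin ℓ → SatVar n m ℓ
  | y : Fin n → Fin (ℓ + 1) → SatVar n m ℓ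
deriving DecidableEq

/-- A literal: a variable together with a polarity (`true` = positive, `false` = negated). -/
abbrev SatLit (n m ℓ : ℕ) := SatVar n m ℓ × Bool

/-- A clause is a disjunction of literals, represented as a list. -/
abbrev SatClause (n m ℓ : ℕ) := List (SatLit n m ℓ)

/-- A truth assignment satisfies a clause if it makes at least one of its literals true. -/
def SatisfiesClause {n m ℓ : ℕ} (φ : SatVar n m ℓ → Bool) (c : SatClause n m ℓ) : Prop :=
  ∃ l ∈ c, φ l.1 = l.2

/-- A truth assignment satisfies a set of clauses if it satisfies every clause in it. -/
def Satisfies {n m ℓ : ℕ} (φ : SatVar n m ℓ → Bool) (C : Set (SatClause n m ℓ)) : Prop :=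
  ∀ c ∈ C, SatisfiesClause φ c

/-- The group `I` of initial clauses: the unit clauses `y_{j,0}` for `1 ≤ j ≤ n`. -/
def clausesI (n m ℓ : ℕ) : Set (SatClause n m ℓ) :=
  {c | ∃ j : Fin n, c = [(SatVar.y j 0, true)]}

/-- The group `L` of letter clauses: for each `t`, the clause `x_{1,t} ∨ ⋯ ∨ x_{m,t}`
and the clauses `¬x_{r,t} ∨ ¬x_{s,t}` for `1 ≤ r < s ≤ m`. -/
def clausesL (n m ℓ : ℕ) : Set (SatClause n m ℓ) :=
  {c | ∃ t : Fin ℓ, c = (List.finRange m).map fun i => ((SatVar.x i t : SatVar n m ℓ), true)} ∪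
  {c | ∃ t : Fin ℓ, ∃ r s : Fin m, r < s ∧
    c = [(SatVar.x r t, false), (SatVar.x s t, false)]}

/-- The group `T` of transition clauses: for each `t` and each pair `(q_j, a_i)`, the
clause `¬y_{j,t-1} ∨ ¬x_{i,t} ∨ y_{k,t}` if `δ(q_j, a_i) = {q_k}`, and the clause
`¬y_{j,t-1} ∨ ¬x_{i,t}` if `δ(q_j, a_i)` is undefined. -/
def clausesT {n m : ℕ} (δ : Fin n → Fin m → Option (Fin n)) (ℓ : ℕ) :
    Set (SatClause n m ℓ) :=
  {c | ∃ (t : Fin ℓ) (j : Fin n) (i : Fin m) (k : Fin n), δ j i = some k ∧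
    c = [(SatVar.y j t.castSucc, false), (SatVar.x i t, false), (SatVar.y k t.succ, true)]} ∪
  {c | ∃ (t : Fin ℓ) (j : Fin n) (i : Fin m), δ j i = none ∧
    c = [(SatVar.y j t.castSucc, false), (SatVar.x i t, false)]}

/-- The group `S` of synchronization clauses: `¬y_{r,ℓ} ∨ ¬y_{s,ℓ}` for `1 ≤ r < s ≤ n`. -/
def clausesS (n m ℓ : ℕ) : Set (SatClause n m ℓ) :=
  {c | ∃ r s : Fin n, r < s ∧
    c = [(SatVar.y r (Fin.last ℓ), false), (SatVar.y s (Fin.last ℓ), false)]}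

/-- The set `C = I ∪ L ∪ T ∪ S` of clauses of the SAT instance encoding `(A, ℓ)`. -/
def encodingClauses {n m : ℕ} (δ : Fin n → Fin m → Option (Fin n)) (ℓ : ℕ) :
    Set (SatClause n m ℓ) :=
  clausesI n m ℓ ∪ clausesL n m ℓ ∪ clausesT δ ℓ ∪ clausesS n m ℓ

/-- If `φ` is a satisfying assignment of the SAT instance encoding `(A, ℓ)` and
`χ` assigns to each `t ∈ {1,…,ℓ}` the unique `i` with `φ(x_{i,t}) = 1`, then the word
`w = a_{χ(1)} ⋯ a_{χ(ℓ)}` is carefully synchronizing for `A` (and has length `ℓ`). -/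
theorem sat_imp_csw {n m ℓ : ℕ} (hn : 0 < n) (hm : 0 < m) (hℓ : 0 < ℓ)
    (δ : Fin n → Fin m → Option (Fin n))
    (φ : SatVar n m ℓ → Bool) (hφ : Satisfies φ (encodingClauses δ ℓ))
    (χ : Fin ℓ → Fin m) (hχ : ∀ t : Fin ℓ, ∀ i : Fin m, φ (SatVar.x i t) = true ↔ i = χ t) :
    CarefulSync δ ((List.finRange ℓ).map χ) ∧ ((List.finRange ℓ).map χ).length = ℓ := by
  have hlen : ((List.finRange ℓ).map χ).length = ℓ := by simp
  have hI : ∀ j : Fin n, φ (SatVar.y j 0) = true := by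
    intro j
    have := hφ [(SatVar.y j 0, true)] (Or.inl (Or.inl (Or.inl ⟨j, rfl⟩)))
    simpa [SatisfiesClause] using this
  have hT : ∀ (t : Fin ℓ) (j k : Fin n), φ (SatVar.y j t.castSucc) = true →
      δ j (χ t) = some k → φ (SatVar.y k t.succ) = true := by
    intro t j k hy hd
    have hx := (hχ t (χ t)).2 rfl
    have := hφ _ (Or.inl (Or.inr (Or.inl ⟨t, j, χ t, k, hd, rfl⟩)))
    simpa [SatisfiesClause, hy, hx] using this
  have hN : ∀ (t : Fin ℓ) (j : Fin n), φ (SatVar.y j t.castSucc) = true →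
      (δ j (χ t)).isSome := by
    intro t j hy
    by_contra hd
    have hd' : δ j (χ t) = none := by simpa using hd
    have hx := (hχ t (χ t)).2 rfl
    have := hφ _ (Or.inl (Or.inr (Or.inr ⟨t, j, χ t, hd', rfl⟩)))
    simp [SatisfiesClause, hy, hx] at this
  have hS : ∀ r s : Fin n, r < s → φ (SatVar.y r (Fin.last ℓ)) = true →
      φ (SatVar.y s (Fin.last ℓ)) = true → False := by
    intro r s hrs h1 h2
    have := hφ _ (Or.inr ⟨r, s, hrs, rfl⟩)
    simp [SatisfiesClause, h1, h2] at this
  have key : ∀ (t : ℕ) (ht : t < ℓ + 1),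
      (∀ q ∈ pfaExt δ Set.univ (((List.finRange ℓ).map χ).take t),
        φ (SatVar.y q ⟨t, ht⟩) = true) ∧
      (pfaExt δ Set.univ (((List.finRange ℓ).map χ).take t)).Nonempty := by
    intro t
    induction t with
    | zero =>
      intro ht
      exact ⟨fun q _ => hI q, ⟨⟨0, hn⟩, by simp [pfaExt]⟩⟩
    | succ t ih =>
      intro ht
      obtain ⟨h1, p, hp⟩ := ih (by omega)
      have htl : t < ℓ := by omega
      have e : pfaExt δ Set.univ (((List.finRange ℓ).map χ).take (t + 1)) =
          {p | ∃ q ∈ pfaExt δ Set.univ (((List.finRange ℓ).map χ).take t),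
            δ q (χ ⟨t, htl⟩) = some p} := by
        rw [List.take_succ_eq_append_getElem (by simpa using htl)]
        simp [pfaExt, List.foldl_append]
      rw [e]
      constructor
      · rintro q ⟨r, hr, hd⟩
        exact hT ⟨t, htl⟩ r q (h1 r hr) hd
      · obtain ⟨k, hk⟩ := Option.isSome_iff_exists.1 (hN ⟨t, htl⟩ p (h1 p hp))
        exact ⟨k, p, hp, hk⟩
  refine ⟨⟨?_, ?_, ?_⟩, hlen⟩
  · intro h
    rw [h] at hlen
    simp at hlen
    omega
  · rintro ⟨t, ht⟩ q hq
    have htl : t < ℓ := by simpa using ht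
    have := hN ⟨t, htl⟩ q ((key t (by omega)).1 q hq)
    simpa using this
  · obtain ⟨h1, p, hp⟩ := key ℓ (by omega)
    rw [List.take_of_length_le (by simp)] at h1 hp
    rw [Set.ncard_eq_one]
    refine ⟨p, Set.eq_singleton_iff_unique_mem.2 ⟨hp, fun q hq => ?_⟩⟩
    rcases lt_trichotomy q p with h | h | h
    · exact (hS q p h (h1 q hq) (h1 p hp)).elim
    · exact h
    · exact (hS p q h (h1 p hp) (h1 q hq)).elim
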